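/- arXiv:0910.5662 — 2 statements merged into one kernel-verified Lean document; each statement's English description precedes it below -/
import Mathlib

section
/- Let Δ = [a,b] ⊂ ℝ ⊂ ℂ, let f : Δ → ℝ be continuous, let α ∈ (0,1), let (n_k) be a strictly increasing sequence of naturals, and let p_{n_k}, q_{n_k} be polynomials of degree ≤ n_k with q_{n_k}(z) ≠ 0 for all z ∈ Δ and sup_{x∈Δ} |f(x) − p_{n_k}(x)/q_{n_k}(x)| ≤ α^{n_k} for all k. Define u(z,w) = limsup_{k→∞} (1/n_k)·log|q_{n_k}(z)·w − p_{n_k}(z)|. Then for every point (x,w) ∈ Δ × ℂ with w ≠ f(x), u(x,w) = limsup_{k→∞} log|q_{n_k}(x)|^{1/n_k}. -/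
/-!
Factor `q_k w - p_k = q_k (w - p_k / q_k)`. Off the graph the second factor tends to the nonzero
number `w - f x`, so its logarithm stays bounded and the weight `1 / n_k → 0` kills it in the limit.
-/

open Filter Metric

noncomputable section

/-- Extended-real logarithm: `elog 0 = -∞`, otherwise the usual real logarithm. -/
def elog (x : ℝ) : EReal := if x = 0 then ⊥ else ((Real.log x : ℝ) : EReal)

lemma elog_of_ne_zero {x : ℝ} (hx : x ≠ 0) : elog x = (Real.log x : ℝ) := if_neg hx

lemma elog_mul (x y : ℝ) : elog (x * y) = elog x + elog y := by
  by_cases hx : x = 0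
  · simp [elog, hx]
  by_cases hy : y = 0
  · simp [elog, hy]
  rw [elog_of_ne_zero hx, elog_of_ne_zero hy, elog_of_ne_zero (mul_ne_zero hx hy),
    Real.log_mul hx hy, EReal.coe_add]

lemma continuousAt_elog {x : ℝ} (hx : x ≠ 0) : ContinuousAt elog x := by
  have hlog : ContinuousAt (fun y => (Real.log y : EReal)) x :=
    continuous_coe_real_ereal.continuousAt.comp (Real.continuousAt_log hx)
  exact hlog.congr ((eventually_ne_nhds hx).mono fun y hy => (elog_of_ne_zero hy).symm)

lemma ereal_coe_mul_add_coe (c : ℝ) (x : EReal) (y : ℝ) :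
    (c : EReal) * (x + y) = c * x + c * y := by
  induction x with
  | bot =>
    rcases lt_trichotomy c 0 with hc | rfl | hc
    · simp [EReal.coe_mul_bot_of_neg hc, ← EReal.coe_mul]
    · simp
    · simp [EReal.coe_mul_bot_of_pos hc]
  | coe x => exact_mod_cast mul_add c x y
  | top =>
    rcases lt_trichotomy c 0 with hc | rfl | hc
    · simp [EReal.coe_mul_top_of_neg hc]
    · simp
    · simp [EReal.coe_mul_top_of_pos hc, ← EReal.coe_mul]

section Limits

variable {ι : Type*} {l : Filter ι}

lemma ereal_limsup_add_of_right_tendsto_zero {v : ι → EReal} (hv : Tendsto v l (nhds 0))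
    (u : ι → EReal) : limsup (u + v) l = limsup u l := by
  rcases l.eq_or_neBot with rfl | _
  · simp
  refine le_antisymm ?_ ?_
  · simpa [hv.limsup_eq] using EReal.limsup_add_le (f := l) (u := u) (v := v)
      (.inr (by simp [hv.limsup_eq])) (.inr (by simp [hv.limsup_eq]))
  · simpa [hv.liminf_eq] using EReal.le_limsup_add (f := l) (u := u) (v := v)

lemma tendsto_mul_elog_zero {s y : ι → ℝ} {c : ℝ} (hs : Tendsto s l (nhds 0))
    (hy : Tendsto y l (nhds c)) (hc : c ≠ 0) :
    Tendsto (fun k => (s k : EReal) * elog (y k)) l (nhds 0) := by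
  have helog : Tendsto (fun k => elog (y k)) l (nhds (Real.log c : ℝ)) :=
    elog_of_ne_zero hc ▸ (continuousAt_elog hc).tendsto.comp hy
  simpa using EReal.Tendsto.mul (EReal.tendsto_coe.2 hs) helog (by simp) (by simp) (by simp)
    (by simp)

lemma limsup_mul_elog_mul {s y : ι → ℝ} {c : ℝ} (hs : Tendsto s l (nhds 0))
    (hy : Tendsto y l (nhds c)) (hc : c ≠ 0) (x : ι → ℝ) :
    limsup (fun k => (s k : EReal) * elog (x k * y k)) l =
      limsup (fun k => (s k : EReal) * elog (x k)) l := by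
  have hsplit : ∀ᶠ k in l, (s k : EReal) * elog (x k * y k) =
      s k * elog (x k) + s k * elog (y k) := by
    filter_upwards [hy.eventually_ne hc] with k hk
    rw [elog_mul, elog_of_ne_zero hk, ereal_coe_mul_add_coe]
  rw [limsup_congr hsplit]
  exact ereal_limsup_add_of_right_tendsto_zero (tendsto_mul_elog_zero hs hy hc) _

lemma tendsto_of_norm_sub_le_pow {E : Type*} [SeminormedAddCommGroup E] {g : ι → E} {c : E}
    {r : ℝ} (hr : r ∈ Set.Ico (0 : ℝ) 1) {n : ι → ℕ} (hn : Tendsto n l atTop)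
    (hg : ∀ k, ‖c - g k‖ ≤ r ^ n k) : Tendsto g l (nhds c) :=
  tendsto_iff_norm_sub_tendsto_zero.2 <| squeeze_zero (fun _ => norm_nonneg _)
    (fun k => norm_sub_rev c (g k) ▸ hg k)
    ((tendsto_pow_atTop_nhds_zero_of_lt_one hr.1 hr.2).comp hn)

theorem off_graph_value_general {𝕜 : Type*} [NormedField 𝕜] {s : ι → ℝ} {p q : ι → 𝕜} {c w : 𝕜}
    (hs : Tendsto s l (nhds 0)) (hq : ∀ᶠ k in l, q k ≠ 0)
    (hpq : Tendsto (fun k => p k / q k) l (nhds c)) (hw : w ≠ c) :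
    limsup (fun k => (s k : EReal) * elog ‖q k * w - p k‖) l =
      limsup (fun k => (s k : EReal) * elog ‖q k‖) l := by
  have hfactor : ∀ᶠ k in l, (s k : EReal) * elog ‖q k * w - p k‖ =
      s k * elog (‖q k‖ * ‖w - p k / q k‖) := by
    filter_upwards [hq] with k hk
    rw [← norm_mul, mul_sub, mul_div_cancel₀ _ hk]
  rw [limsup_congr hfactor]
  exact limsup_mul_elog_mul hs (hpq.const_sub w).norm (norm_ne_zero_iff.2 (sub_ne_zero.2 hw)) _

end Limits

/-- If `p_{n_k}/q_{n_k}` approximates `f` on `Δ = [a,b]` with error at most `α^{n_k}`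
and `u(z,w) = limsup_k (1/n_k)·log|q_{n_k}(z)·w − p_{n_k}(z)|`, then for every point
`(x,w) ∈ Δ × ℂ` off the graph of `f` (i.e. `w ≠ f(x)`),
`u(x,w) = limsup_k log|q_{n_k}(x)|^{1/n_k}`. -/
theorem off_graph_value (a b : ℝ) (hab : a < b) (f : ℝ → ℝ)
    (hf : ContinuousOn f (Set.Icc a b)) (α : ℝ) (hα : α ∈ Set.Ioo (0 : ℝ) 1)
    (n : ℕ → ℕ) (hmono : StrictMono n) (P Q : ℕ → Polynomial ℂ)
    (hP : ∀ k, (P k).natDegree ≤ n k) (hQ : ∀ k, (Q k).natDegree ≤ n k)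
    (hQ0 : ∀ k, ∀ x ∈ Set.Icc a b, (Q k).eval (x : ℂ) ≠ 0)
    (happrox : ∀ k, ∀ x ∈ Set.Icc a b,
      ‖(f x : ℂ) - (P k).eval (x : ℂ) / (Q k).eval (x : ℂ)‖ ≤ α ^ n k) :
    ∀ x ∈ Set.Icc a b, ∀ w : ℂ, w ≠ (f x : ℂ) →
      Filter.limsup (fun k => ((1 / (n k : ℝ) : ℝ) : EReal) *
          elog (‖(Q k).eval (x : ℂ) * w - (P k).eval (x : ℂ)‖))
        Filter.atTop =
      Filter.limsup (fun k => ((1 / (n k : ℝ) : ℝ) : EReal) *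
          elog (‖(Q k).eval (x : ℂ)‖)) Filter.atTop := by
  intro x hx w hw
  have hn : Tendsto n atTop atTop := hmono.tendsto_atTop
  exact off_graph_value_general (tendsto_one_div_atTop_nhds_zero_nat.comp hn)
    (.of_forall fun k => hQ0 k x hx)
    (tendsto_of_norm_sub_le_pow (Set.Ioo_subset_Ico_self hα) hn fun k => happrox k x hx) hw
end
end

section
/- Let A₀ ⊂ ℂ be a compact set of positive logarithmic capacity and let U(0,r) = {z ∈ ℂ : |z| < r} be an open disk containing A₀. For each n, let T_n be a polynomial of degree ≤ n minimizing ‖T_n‖_{A₀} among all polynomials of degree ≤ n normalized by ‖T_n‖_{U(0,r)} = 1. Then the limit lim_{n→∞} ‖T_n‖_{A₀}^{1/n} exists and equals τ(A₀, U(0,r)) = exp(−max_{z∈\overline{U(0,r)}} V*(z, A₀)); moreover ‖T_n‖_{A₀}^{1/n} ≥ τ(A₀, U(0,r)) for every n ≥ 1. -/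
open Filter Metric

noncomputable section

/-- A subharmonic function on `ℂ` with values in `[-∞, ∞)`: upper semicontinuous,
never `+∞`, and dominated on every closed disk by every continuous function which is
harmonic inside the disk and dominates it on the boundary circle. -/
def SubharmonicFn (u : ℂ → EReal) : Prop :=
  UpperSemicontinuous u ∧ (∀ z, u z ≠ ⊤) ∧
  ∀ (c : ℂ) (r : ℝ), 0 < r →
    ∀ h : ℂ → ℝ, ContinuousOn h (closedBall c r) →
      (∃ F : ℂ → ℂ, DifferentiableOn ℂ F (ball c r) ∧ ∀ z ∈ ball c r, h z = (F z).re) →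
      (∀ z ∈ sphere c r, u z ≤ ((h z : ℝ) : EReal)) →
      ∀ z ∈ closedBall c r, u z ≤ ((h z : ℝ) : EReal)

/-- A set `S ⊆ ℂ` is polar if it is contained in the `-∞` set of a subharmonic
function on `ℂ` which is not identically `-∞`.  A compact set has positive
logarithmic capacity iff it is not polar. -/
def PolarSet (S : Set ℂ) : Prop :=
  ∃ u : ℂ → EReal, SubharmonicFn u ∧ (∃ z, u z ≠ ⊥) ∧ ∀ z ∈ S, u z = ⊥

/-- The (pre-regularized) Green extremal function of a set `E ⊆ ℂ`:
`V(z,E) = sup { (1/m)·log|p(z)| : deg p ≤ m, m ≥ 1, ‖p‖_E ≤ 1 }`. -/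
def greenV (E : Set ℂ) (z : ℂ) : ℝ :=
  sSup {t : ℝ | ∃ m : ℕ, 1 ≤ m ∧ ∃ p : Polynomial ℂ, p.natDegree ≤ m ∧
    (∀ ζ ∈ E, ‖p.eval ζ‖ ≤ 1) ∧ t = Real.log ‖p.eval z‖ / m}

/-- The Green extremal function `V*(z,E)`: the upper semicontinuous regularization
`V*(z,E) = limsup_{z' → z} V(z',E)`. -/
def greenVstar (E : Set ℂ) (z : ℂ) : ℝ :=
  Filter.limsup (greenV E) (nhds z)

/-- The sup-norm `‖p‖_E = sup_{z ∈ E} |p(z)|` of a polynomial on a set `E ⊆ ℂ`. -/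
def polySup (p : Polynomial ℂ) (E : Set ℂ) : ℝ :=
  sSup ((fun z => ‖p.eval z‖) '' E)

/-- Sadullaev's `τ`-capacity:
`τ(A, U(0,r)) = exp(−max_{z ∈ closure U(0,r)} V*(z, A))`. -/
def tauCap (A : Set ℂ) (r : ℝ) : ℝ :=
  Real.exp (-(sSup (greenVstar A '' closedBall (0 : ℂ) r)))

/-!
Polynomials of degree `≤ m` bounded by `1` on a nonpolar set `A` are bounded by `exp (m * M)` on the
disk for a single `M`. Otherwise there are polynomials `q j` of degree `≤ m j` with maximum `1` on
the unit disk and `|q j| ≤ exp (-m j * 2 ^ j)` on `A`. The product of the functions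
`|q j| ^ (1 / (m j * 2 ^ j))` then vanishes on `A`, whereas its Mahler measure is bounded below
because that of `q j` is at least `2 ^ (-m j)`. Its logarithm is subharmonic, as the limit of a
decreasing sequence of damped partial products, so `A` would be polar.

By the Bernstein–Walsh inequality the least such `M` is the maximum of `V*` over the closed disk.
Rescaling polynomials turns the bound `exp (m * M)` into `exp (-m * M) ≤ ‖T m‖_A`, so this maximum
is also the supremum of `-log ‖T m‖_A / m`. As powers of `T q` compete with `T n`, this supremum is
a limit, as in Fekete's lemma.
-/

open Polynomial Topology

/-- `f` has a holomorphic support function at `w`: near `w` it dominates the modulus of an analytic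
function, with equality at `w`. If this holds at every `w` and `f` is continuous, then `log f` is
subharmonic; unlike subharmonicity, the condition is visibly stable under products, powers and
maxima. -/
def HasHolomorphicSupportAt (f : ℂ → ℝ) (w : ℂ) : Prop :=
  ∃ φ : ℂ → ℂ, AnalyticAt ℂ φ w ∧ ‖φ w‖ = f w ∧ ∀ᶠ z in 𝓝 w, ‖φ z‖ ≤ f z

namespace HasHolomorphicSupportAt

variable {f g : ℂ → ℝ} {w c : ℂ} {s : ℝ}

theorem norm_of_analyticAt {φ : ℂ → ℂ} (hφ : AnalyticAt ℂ φ w) :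
    HasHolomorphicSupportAt (fun z => ‖φ z‖) w :=
  ⟨φ, hφ, rfl, .of_forall fun _ => le_rfl⟩

theorem nonneg (hf : HasHolomorphicSupportAt f w) : 0 ≤ f w := by
  obtain ⟨φ, -, hφw, -⟩ := hf
  exact hφw ▸ norm_nonneg _

theorem congr (hf : HasHolomorphicSupportAt f w) (hfg : f =ᶠ[𝓝 w] g) :
    HasHolomorphicSupportAt g w := by
  obtain ⟨φ, hφ, hφw, hφf⟩ := hf
  refine ⟨φ, hφ, hφw.trans hfg.eq_of_nhds, ?_⟩
  filter_upwards [hφf, hfg] with z hz hfgz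
  exact hz.trans_eq hfgz

theorem mul (hf : HasHolomorphicSupportAt f w) (hg : HasHolomorphicSupportAt g w) :
    HasHolomorphicSupportAt (fun z => f z * g z) w := by
  obtain ⟨φ, hφ, hφw, hφf⟩ := hf
  obtain ⟨ψ, hψ, hψw, hψg⟩ := hg
  refine ⟨fun z => φ z * ψ z, hφ.mul hψ, by rw [norm_mul, hφw, hψw], ?_⟩
  filter_upwards [hφf, hψg] with z hz hz'
  rw [norm_mul]
  gcongr
  exact (norm_nonneg _).trans hz

theorem finsetProd {ι : Type*} {F : ι → ℂ → ℝ} {t : Finset ι}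
    (hF : ∀ i ∈ t, HasHolomorphicSupportAt (F i) w) :
    HasHolomorphicSupportAt (fun z => ∏ i ∈ t, F i z) w := by
  induction t using Finset.cons_induction with
  | empty => simpa using norm_of_analyticAt (analyticAt_const (v := (1 : ℂ)) (x := w))
  | cons i t hi ih =>
    simp only [Finset.prod_cons]
    exact (hF i (Finset.mem_cons_self i t)).mul
      (ih fun j hj => hF j (Finset.mem_cons_of_mem hj))

theorem sup (hf : HasHolomorphicSupportAt f w) (hg : HasHolomorphicSupportAt g w) :
    HasHolomorphicSupportAt (fun z => f z ⊔ g z) w := by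
  wlog hfg : g w ≤ f w generalizing f g
  · simpa only [sup_comm] using this hg hf (le_of_not_ge hfg)
  obtain ⟨φ, hφ, hφw, hφf⟩ := hf
  exact ⟨φ, hφ, hφw.trans (sup_eq_left.2 hfg).symm, hφf.mono fun z hz => hz.trans le_sup_left⟩

theorem rpow (hf : HasHolomorphicSupportAt f w) {a : ℝ} (ha : 0 < a) :
    HasHolomorphicSupportAt (fun z => f z ^ a) w := by
  obtain ⟨φ, hφ, hφw, hφf⟩ := hf
  by_cases hw : φ w = 0
  · refine ⟨fun _ => 0, analyticAt_const, ?_, ?_⟩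
    · simp only [← hφw, hw, norm_zero, Real.zero_rpow ha.ne']
    · filter_upwards [hφf] with z hz
      rw [norm_zero]
      exact Real.rpow_nonneg ((norm_nonneg _).trans hz) a
  -- Dividing by `φ w` keeps the values near `1`, inside the domain of the principal branch.
  have hnorm : ∀ z, ‖(φ w : ℂ) ^ (a : ℂ) * (φ z / φ w) ^ (a : ℂ)‖ = ‖φ z‖ ^ a := fun z => by
    rw [norm_mul, Complex.norm_cpow_real, Complex.norm_cpow_real, norm_div,
      ← Real.mul_rpow (norm_nonneg _) (by positivity), mul_div_cancel₀ _ (norm_ne_zero_iff.2 hw)]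
  refine ⟨fun z => (φ w) ^ (a : ℂ) * (φ z / φ w) ^ (a : ℂ), ?_, ?_, ?_⟩
  · refine analyticAt_const.mul (hφ.div_const.cpow analyticAt_const ?_)
    rw [div_self hw]
    exact Complex.one_mem_slitPlane
  · rw [hnorm, hφw]
  · filter_upwards [hφf] with z hz
    rw [hnorm]
    exact Real.rpow_le_rpow (norm_nonneg _) hz ha.le

theorem eventually_eq_of_isLocalMax (hf : HasHolomorphicSupportAt f w) (hmax : IsLocalMax f w) :
    ∀ᶠ z in 𝓝 w, f z = f w := by
  obtain ⟨φ, hφ, hφw, hφf⟩ := hf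
  have hφmax : IsLocalMax (norm ∘ φ) w := by
    filter_upwards [hφf, hmax] with z hz hz'
    exact (hz.trans hz').trans_eq hφw.symm
  have hφdiff : ∀ᶠ z in 𝓝 w, DifferentiableAt ℂ φ z :=
    hφ.eventually_analyticAt.mono fun z hz => hz.differentiableAt
  filter_upwards [hφf, hmax, Complex.norm_eventually_eq_of_isLocalMax hφdiff hφmax]
    with z hz hz' hφz
  exact le_antisymm hz' (by rwa [← hφw, ← hφz])

theorem exists_mem_sphere_isMaxOn (hs : 0 ≤ s) (hfc : ContinuousOn f (closedBall c s))
    (hf : ∀ w ∈ ball c s, HasHolomorphicSupportAt f w) :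
    ∃ w ∈ sphere c s, IsMaxOn f (closedBall c s) w := by
  obtain ⟨v, hv, hvmax⟩ :=
    (isCompact_closedBall c s).exists_isMaxOn (nonempty_closedBall.2 hs) hfc
  let K := {z ∈ closedBall c s | f v ≤ f z}
  have hKclosed : IsClosed K := isClosed_closedBall.isClosed_le continuousOn_const hfc
  have hKne : K ≠ Set.univ := fun h =>
    NormedSpace.unbounded_univ ℂ ℂ (h ▸ isBounded_closedBall.subset (Set.sep_subset _ _))
  obtain ⟨w, hw⟩ := (nonempty_frontier_iff (s := K)).2 ⟨⟨v, hv, le_refl (f v)⟩, hKne⟩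
  obtain ⟨hwball, hvw⟩ : w ∈ K := hKclosed.frontier_subset hw
  have hwmax : IsMaxOn f (closedBall c s) w := fun z hz => (hvmax hz).trans hvw
  refine ⟨w, ?_, hwmax⟩
  -- At an interior maximum `f` is locally constant, so `w` would be an interior point of `K`.
  by_contra hwsphere
  have hwint : w ∈ ball c s := lt_of_le_of_ne hwball hwsphere
  have hnhds : closedBall c s ∈ 𝓝 w := mem_of_superset (isOpen_ball.mem_nhds hwint)
    ball_subset_closedBall
  have hconst := (hf w hwint).eventually_eq_of_isLocalMax (hwmax.isLocalMax hnhds)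
  refine hw.2 (mem_interior_iff_mem_nhds.2 ?_)
  filter_upwards [hnhds, hconst] with z hz hfz
  exact ⟨hz, hvw.trans_eq hfz.symm⟩

theorem le_exp_of_forall_sphere_le_exp (hfc : ContinuousOn f (closedBall c s))
    (hf : ∀ w ∈ ball c s, HasHolomorphicSupportAt f w) {h : ℂ → ℝ}
    (hhc : ContinuousOn h (closedBall c s))
    (hh : ∃ F : ℂ → ℂ, DifferentiableOn ℂ F (ball c s) ∧ ∀ z ∈ ball c s, h z = (F z).re)
    (hle : ∀ z ∈ sphere c s, f z ≤ Real.exp (h z)) {z : ℂ} (hz : z ∈ closedBall c s) :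
    f z ≤ Real.exp (h z) := by
  obtain ⟨F, hFd, hF⟩ := hh
  have hquot : ∀ x, f x * Real.exp (-h x) ≤ 1 ↔ f x ≤ Real.exp (h x) := fun x => by
    rw [Real.exp_neg, mul_inv_le_iff₀ (Real.exp_pos _), one_mul]
  have hsupp : ∀ w ∈ ball c s, HasHolomorphicSupportAt (fun x => f x * Real.exp (-h x)) w := by
    intro w hw
    have hball := isOpen_ball.mem_nhds hw
    have hexp : AnalyticAt ℂ (fun x => Complex.exp (-F x)) w :=
      (hFd.analyticAt hball).neg.cexp
    refine (hf w hw).mul ((norm_of_analyticAt hexp).congr ?_)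
    filter_upwards [hball] with x hx
    rw [Complex.norm_exp, Complex.neg_re, hF x hx]
  obtain ⟨w, hw, hmax⟩ := exists_mem_sphere_isMaxOn (nonempty_closedBall.1 ⟨z, hz⟩)
    (hfc.mul (Real.continuous_exp.comp_continuousOn hhc.neg)) hsupp
  exact (hquot z).1 ((hmax hz).trans ((hquot w).2 (hle w hw)))

end HasHolomorphicSupportAt

theorem exists_forall_le_of_antitone {X : Type*} [TopologicalSpace X] [T2Space X]
    {H : ℕ → X → ℝ} (hH : ∀ N, Continuous (H N)) (hanti : Antitone H) {K : Set X}
    (hK : IsCompact K) {f : X → ℝ} (hf : ContinuousOn f K) (hne : ∀ N, ∃ x ∈ K, f x ≤ H N x) :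
    ∃ x ∈ K, ∀ N, f x ≤ H N x := by
  have hclosed : ∀ N, IsClosed {x ∈ K | f x ≤ H N x} := fun N =>
    hK.isClosed.isClosed_le hf (hH N).continuousOn
  obtain ⟨x, hx⟩ := IsCompact.nonempty_iInter_of_sequence_nonempty_isCompact_isClosed
    (fun N => {x ∈ K | f x ≤ H N x})
    (fun N x hx => ⟨hx.1, hx.2.trans (hanti N.le_succ x)⟩) hne
    (hK.of_isClosed_subset (hclosed 0) (Set.sep_subset _ _)) hclosed
  rw [Set.mem_iInter] at hx
  exact ⟨x, (hx 0).1, fun N => (hx N).2⟩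

theorem ennrealLog_ofReal_le_coe_iff {a x : ℝ} :
    ENNReal.log (ENNReal.ofReal a) ≤ (x : EReal) ↔ a ≤ Real.exp x := by
  rw [← Real.log_exp x, ← ENNReal.log_ofReal_of_pos (Real.exp_pos x), ENNReal.log_le_log_iff,
    ENNReal.ofReal_le_ofReal_iff (Real.exp_pos x).le, Real.log_exp]

theorem coe_le_ennrealLog_ofReal_iff {a x : ℝ} :
    (x : EReal) ≤ ENNReal.log (ENNReal.ofReal a) ↔ Real.exp x ≤ a := by
  rw [← Real.log_exp x, ← ENNReal.log_ofReal_of_pos (Real.exp_pos x), ENNReal.log_le_log_iff,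
    ENNReal.ofReal_le_ofReal_iff', Real.log_exp, or_iff_left (Real.exp_pos x).not_ge]

section InfLog

variable {H : ℕ → ℂ → ℝ}

theorem subharmonicFn_iInf_log (hcont : ∀ N, Continuous (H N))
    (hsupp : ∀ N w, HasHolomorphicSupportAt (H N) w) (hanti : Antitone H) :
    SubharmonicFn fun z => ⨅ N, ENNReal.log (ENNReal.ofReal (H N z)) := by
  refine ⟨upperSemicontinuous_iInf fun N => ?_, fun z => ?_, ?_⟩
  · exact (ENNReal.continuous_log.comp
      (ENNReal.continuous_ofReal.comp (hcont N))).upperSemicontinuous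
  · exact ((iInf_le (fun N => ENNReal.log (ENNReal.ofReal (H N z))) 0).trans_lt
      (ENNReal.log_lt_top_iff.2 ENNReal.ofReal_lt_top)).ne
  intro c s _ h hhc ⟨F, hFd, hF⟩ hsphere z hz
  refine EReal.le_of_forall_lt_iff_le.1 fun x hx => ?_
  obtain ⟨ε, hε, rfl⟩ : ∃ ε > 0, x = h z + ε :=
    ⟨x - h z, sub_pos.2 (EReal.coe_lt_coe_iff.1 hx), by ring⟩
  have hhcε : ContinuousOn (fun w => h w + ε) (closedBall c s) := hhc.add continuousOn_const
  obtain ⟨N, hN⟩ : ∃ N, ∀ w ∈ sphere c s, H N w ≤ Real.exp (h w + ε) := by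
    by_contra! hcon
    obtain ⟨w, hw, hwN⟩ := exists_forall_le_of_antitone hcont hanti (isCompact_sphere c s)
      (Real.continuous_exp.comp_continuousOn (hhcε.mono sphere_subset_closedBall))
      fun N => (hcon N).imp fun w hw => ⟨hw.1, hw.2.le⟩
    have hle : ((h w + ε : ℝ) : EReal) ≤ h w :=
      (le_iInf fun N => coe_le_ennrealLog_ofReal_iff.2 (hwN N)).trans (hsphere w hw)
    linarith [EReal.coe_le_coe_iff.1 hle]
  have hhε : ∃ G : ℂ → ℂ, DifferentiableOn ℂ G (ball c s) ∧
      ∀ w ∈ ball c s, h w + ε = (G w).re :=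
    ⟨fun w => F w + ε, hFd.add_const _, fun w hw => by
      rw [Complex.add_re, Complex.ofReal_re, hF w hw]⟩
  exact (iInf_le _ N).trans (ennrealLog_ofReal_le_coe_iff.2
    (HasHolomorphicSupportAt.le_exp_of_forall_sphere_le_exp (hcont N).continuousOn
      (fun w _ => hsupp N w) hhcε hhε hN hz))

theorem iInf_log_eq_bot {u : ℕ → ℝ} (hu : Tendsto u atTop (𝓝 0)) :
    ⨅ N, ENNReal.log (ENNReal.ofReal (u N)) = ⊥ := by
  have hlog := (ENNReal.continuous_log.tendsto _).comp (ENNReal.tendsto_ofReal hu)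
  rw [ENNReal.ofReal_zero, ENNReal.log_zero] at hlog
  exact le_bot_iff.1 (ge_of_tendsto' hlog fun N => iInf_le _ N)

theorem polarSet_of_antitone_of_tendsto_zero (hcont : ∀ N, Continuous (H N))
    (hsupp : ∀ N w, HasHolomorphicSupportAt (H N) w) (hanti : Antitone H) {K : Set ℂ}
    (hK : IsCompact K) {δ : ℝ} (hδ : 0 < δ) (hbelow : ∀ N, ∃ z ∈ K, δ ≤ H N z) {A : Set ℂ}
    (hA : ∀ z ∈ A, Tendsto (fun N => H N z) atTop (𝓝 0)) : PolarSet A := by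
  refine ⟨_, subharmonicFn_iInf_log hcont hsupp hanti, ?_, fun z hz => iInf_log_eq_bot (hA z hz)⟩
  obtain ⟨z, -, hz⟩ := exists_forall_le_of_antitone hcont hanti hK continuousOn_const hbelow
  have hlog : (Real.log δ : EReal) ≤ ⨅ N, ENNReal.log (ENNReal.ofReal (H N z)) :=
    le_iInf fun N => coe_le_ennrealLog_ofReal_iff.2 ((Real.exp_log hδ).trans_le (hz N))
  exact ⟨z, ((EReal.bot_lt_coe _).trans_le hlog).ne'⟩

end InfLog

section DampedProduct

/-- The partial product `∏_{j < N} f j`, multiplied by `g ^ (2 * (1/2) ^ N)`. The exponent is the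
sum of the remaining `(1/2) ^ j`, `j ≥ N`, so that these functions decrease in `N` as soon as
`f j ≤ g ^ (1/2) ^ j` for all `j`. -/
def dampedProd (f : ℕ → ℂ → ℝ) (g : ℂ → ℝ) (N : ℕ) (z : ℂ) : ℝ :=
  (∏ j ∈ Finset.range N, f j z) * g z ^ (2 * (1 / 2 : ℝ) ^ N)

variable {f : ℕ → ℂ → ℝ} {g : ℂ → ℝ}

theorem continuous_dampedProd (hf : ∀ j, Continuous (f j)) (hg : Continuous g)
    (N : ℕ) : Continuous (dampedProd f g N) :=
  (continuous_finsetProd _ fun j _ => hf j).mul (hg.rpow_const fun _ => Or.inr (by positivity))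

theorem hasHolomorphicSupportAt_dampedProd {w : ℂ} (hf : ∀ j, HasHolomorphicSupportAt (f j) w)
    (hg : HasHolomorphicSupportAt g w) (N : ℕ) :
    HasHolomorphicSupportAt (dampedProd f g N) w :=
  (HasHolomorphicSupportAt.finsetProd fun j _ => hf j).mul (hg.rpow (by positivity))

theorem antitone_dampedProd (hf : ∀ j z, 0 ≤ f j z) (hg : ∀ z, 0 < g z)
    (hfg : ∀ j z, f j z ≤ g z ^ ((1 / 2 : ℝ) ^ j)) : Antitone (dampedProd f g) := by
  refine antitone_nat_of_succ_le fun N z => ?_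
  have hprod : 0 ≤ ∏ j ∈ Finset.range N, f j z := Finset.prod_nonneg fun j _ => hf j z
  calc dampedProd f g (N + 1) z
      = (∏ j ∈ Finset.range N, f j z) * f N z * g z ^ ((1 / 2 : ℝ) ^ N) := by
        have hexp : 2 * (1 / 2 : ℝ) ^ (N + 1) = (1 / 2) ^ N := by ring
        rw [dampedProd, Finset.prod_range_succ, hexp]
    _ ≤ (∏ j ∈ Finset.range N, f j z) * g z ^ ((1 / 2 : ℝ) ^ N) * g z ^ ((1 / 2 : ℝ) ^ N) := by
        have := (hg z).le
        gcongr
        exact hfg N z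
    _ = dampedProd f g N z := by
        rw [dampedProd, mul_assoc, ← Real.rpow_add (hg z), ← two_mul]

theorem prod_le_dampedProd (hf : ∀ j z, 0 ≤ f j z) (hg : ∀ z, 1 ≤ g z) (N : ℕ) (z : ℂ) :
    ∏ j ∈ Finset.range N, f j z ≤ dampedProd f g N z :=
  le_mul_of_one_le_right (Finset.prod_nonneg fun j _ => hf j z)
    (Real.one_le_rpow (hg z) (by positivity))

theorem tendsto_dampedProd_zero {θ : ℝ} (hθ : θ < 1) {z : ℂ} (hf : ∀ j, 0 ≤ f j z)
    (hfθ : ∀ j, f j z ≤ θ) (hg : 1 ≤ g z) :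
    Tendsto (fun N => dampedProd f g N z) atTop (𝓝 0) := by
  have hlim : Tendsto (fun N => θ ^ N * g z ^ (2 : ℝ)) atTop (𝓝 0) := by
    simpa only [zero_mul] using
      (tendsto_pow_atTop_nhds_zero_of_lt_one ((hf 0).trans (hfθ 0)) hθ).mul_const _
  refine squeeze_zero (fun N => ?_) (fun N => ?_) hlim
  · exact mul_nonneg (Finset.prod_nonneg fun j _ => hf j)
      (Real.rpow_nonneg (zero_le_one.trans hg) _)
  · have hprod : ∏ j ∈ Finset.range N, f j z ≤ θ ^ N := by
      simpa only [Finset.prod_const, Finset.card_range] using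
        Finset.prod_le_prod (fun j _ => hf j) fun j (_ : j ∈ Finset.range N) => hfθ j
    have hexp : 2 * (1 / 2 : ℝ) ^ N ≤ 2 :=
      mul_le_of_le_one_right zero_le_two (pow_le_one₀ (by norm_num) (by norm_num))
    exact mul_le_mul hprod (Real.rpow_le_rpow_of_exponent_le hg hexp)
      (Real.rpow_nonneg (zero_le_one.trans hg) _) (pow_nonneg ((hf 0).trans (hfθ 0)) N)

theorem polarSet_of_le_prod (hfc : ∀ j, Continuous (f j))
    (hf : ∀ j w, HasHolomorphicSupportAt (f j) w) (hgc : Continuous g)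
    (hg : ∀ w, HasHolomorphicSupportAt g w) (hg1 : ∀ z, 1 ≤ g z)
    (hfg : ∀ j z, f j z ≤ g z ^ ((1 / 2 : ℝ) ^ j)) {K : Set ℂ} (hK : IsCompact K) {δ : ℝ}
    (hδ : 0 < δ) (hbelow : ∀ N, ∃ z ∈ K, δ ≤ ∏ j ∈ Finset.range N, f j z) {A : Set ℂ} {θ : ℝ}
    (hθ : θ < 1) (hA : ∀ z ∈ A, ∀ j, f j z ≤ θ) : PolarSet A := by
  have hf0 : ∀ j z, 0 ≤ f j z := fun j z => (hf j z).nonneg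
  refine polarSet_of_antitone_of_tendsto_zero (continuous_dampedProd hfc hgc)
    (fun N w => hasHolomorphicSupportAt_dampedProd (fun j => hf j w) (hg w) N)
    (antitone_dampedProd hf0 (fun z => zero_lt_one.trans_le (hg1 z)) hfg) hK hδ (fun N => ?_)
    fun z hz => tendsto_dampedProd_zero hθ (fun j => hf0 j z) (hA z hz) (hg1 z)
  obtain ⟨z, hz, hδz⟩ := hbelow N
  exact ⟨z, hz, hδz.trans (prod_le_dampedProd hf0 hg1 N z)⟩

end DampedProduct

theorem norm_eval_le_two_pow_mul_mahlerMeasure {p : ℂ[X]} {n : ℕ} (hp : p.natDegree ≤ n) {z : ℂ}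
    (hz : ‖z‖ ≤ 1) : ‖p.eval z‖ ≤ 2 ^ n * p.mahlerMeasure := by
  have hM := p.mahlerMeasure_nonneg
  have hterm : ∀ i, ‖p.coeff i * z ^ i‖ ≤ p.natDegree.choose i * p.mahlerMeasure := fun i => by
    rw [norm_mul, norm_pow]
    exact (mul_le_of_le_one_right (norm_nonneg _) (pow_le_one₀ (norm_nonneg _) hz)).trans
      (p.norm_coeff_le_choose_mul_mahlerMeasure i)
  calc ‖p.eval z‖ = ‖∑ i ∈ Finset.range (p.natDegree + 1), p.coeff i * z ^ i‖ := by
        rw [eval_eq_sum_range]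
    _ ≤ ∑ i ∈ Finset.range (p.natDegree + 1), p.natDegree.choose i * p.mahlerMeasure :=
        norm_sum_le_of_le _ fun i _ => hterm i
    _ = 2 ^ p.natDegree * p.mahlerMeasure := by
        rw [← Finset.sum_mul, ← Nat.cast_sum, Nat.sum_range_choose, Nat.cast_pow, Nat.cast_ofNat]
    _ ≤ 2 ^ n * p.mahlerMeasure := by
        gcongr
        exact one_le_two

theorem mahlerMeasure_le_of_forall_norm_eq_one {p : ℂ[X]} {B : ℝ} (hB : 0 < B)
    (hp : ∀ z : ℂ, ‖z‖ = 1 → ‖p.eval z‖ ≤ B) : p.mahlerMeasure ≤ B := by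
  rcases eq_or_ne p 0 with rfl | hp0
  · rw [mahlerMeasure_zero]
    exact hB.le
  -- After scaling, the convention `log 0 = 0` at the zeros of `p` is harmless.
  have hscaled : (C (B : ℂ)⁻¹ * p).logMahlerMeasure ≤ 0 := by
    refine Real.circleAverage_mono_on_of_le_circle
      (analyticOnNhd_id.aeval_polynomial _).meromorphicOn.circleIntegrable_log_norm fun z hz => ?_
    have hz1 : ‖z‖ = 1 := by simpa using hz
    refine Real.log_nonpos (norm_nonneg _) ?_
    rw [eval_C_mul, norm_mul, norm_inv, Complex.norm_real, Real.norm_of_nonneg hB.le,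
      inv_mul_le_iff₀ hB, mul_one]
    exact hp z hz1
  have hB' : (B : ℂ)⁻¹ ≠ 0 := inv_ne_zero (Complex.ofReal_ne_zero.2 hB.ne')
  rw [logMahlerMeasure_C_mul hB' hp0, norm_inv, Complex.norm_real, Real.norm_of_nonneg hB.le,
    Real.log_inv, logMahlerMeasure_eq_log_MahlerMeasure] at hscaled
  exact (Real.log_le_log_iff (mahlerMeasure_pos_of_ne_zero hp0) hB).1 (by linarith)

theorem exists_mahlerMeasure_le_norm_eval (p : ℂ[X]) :
    ∃ z : ℂ, ‖z‖ = 1 ∧ p.mahlerMeasure ≤ ‖p.eval z‖ := by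
  obtain ⟨z, hz, hmax⟩ := (isCompact_sphere (0 : ℂ) 1).exists_isMaxOn
    (NormedSpace.sphere_nonempty.2 zero_le_one) p.continuous.norm.continuousOn
  refine ⟨z, mem_sphere_zero_iff_norm.1 hz, le_of_forall_gt_imp_ge_of_dense fun B hB => ?_⟩
  exact mahlerMeasure_le_of_forall_norm_eq_one ((norm_nonneg _).trans_lt hB)
    fun w hw => (hmax (mem_sphere_zero_iff_norm.2 hw)).trans hB.le

theorem mahlerMeasure_finsetProd_pow {ι : Type*} (s : Finset ι) (p : ι → ℂ[X]) (k : ι → ℕ) :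
    (∏ i ∈ s, p i ^ k i).mahlerMeasure = ∏ i ∈ s, (p i).mahlerMeasure ^ k i := by
  let M : ℂ[X] →* ℝ := ⟨⟨mahlerMeasure, mahlerMeasure_one⟩, mahlerMeasure_mul⟩
  exact (map_prod M _ s).trans (Finset.prod_congr rfl fun i _ => map_pow M (p i) (k i))

theorem exists_prod_mahlerMeasure_rpow_le {ι : Type*} (s : Finset ι) (p : ι → ℂ[X]) {d : ι → ℕ}
    (hd : ∀ i ∈ s, d i ≠ 0) :
    ∃ z : ℂ, ‖z‖ = 1 ∧
      ∏ i ∈ s, (p i).mahlerMeasure ^ (d i : ℝ)⁻¹ ≤ ∏ i ∈ s, ‖(p i).eval z‖ ^ (d i : ℝ)⁻¹ := by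
  set D := ∏ i ∈ s, d i
  have hroot : ∀ x : ι → ℝ, (∀ i, 0 ≤ x i) →
      ∏ i ∈ s, x i ^ (D / d i) = (∏ i ∈ s, x i ^ (d i : ℝ)⁻¹) ^ D := fun x hx => by
    rw [← Finset.prod_pow]
    refine Finset.prod_congr rfl fun i hi => ?_
    have hD : d i * (D / d i) = D := Nat.mul_div_cancel' (Finset.dvd_prod_of_mem d hi)
    conv_rhs => rw [← hD, pow_mul, Real.rpow_inv_natCast_pow (hx i) (hd i hi)]
  obtain ⟨z, hz, hle⟩ := exists_mahlerMeasure_le_norm_eval (∏ i ∈ s, p i ^ (D / d i))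
  simp only [mahlerMeasure_finsetProd_pow, eval_prod, eval_pow, norm_prod, norm_pow] at hle
  rw [hroot _ fun i => (p i).mahlerMeasure_nonneg, hroot _ fun i => norm_nonneg _] at hle
  exact ⟨z, hz, le_of_pow_le_pow_left₀ (Finset.prod_ne_zero_iff.2 hd)
    (Finset.prod_nonneg fun i _ => Real.rpow_nonneg (norm_nonneg _) _) hle⟩

theorem norm_eval_reflect_inv_mul_norm_pow {p : ℂ[X]} {n : ℕ} (hp : p.natDegree ≤ n) {z : ℂ}
    (hz : z ≠ 0) : ‖(reflect n p).eval z⁻¹‖ * ‖z‖ ^ n = ‖p.eval z‖ := by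
  let := invertibleOfNonzero hz
  have h := eval₂_reflect_mul_pow (RingHom.id ℂ) z n p hp
  rw [invOf_eq_inv] at h
  rw [eval, eval, ← h, norm_mul, norm_pow]

-- The Bernstein–Walsh inequality; outside the disk apply the maximum principle to the reflection.
theorem norm_eval_le_mul_max_pow {r : ℝ} (hr : 0 < r) {p : ℂ[X]} {n : ℕ} (hp : p.natDegree ≤ n)
    {B : ℝ} (hB : ∀ z ∈ closedBall (0 : ℂ) r, ‖p.eval z‖ ≤ B) (z : ℂ) :
    ‖p.eval z‖ ≤ B * max 1 (‖z‖ / r) ^ n := by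
  rcases le_or_gt ‖z‖ r with hz | hz
  · have hzB := hB z (mem_closedBall_zero_iff.2 hz)
    rwa [max_eq_left ((div_le_one hr).2 hz), one_pow, mul_one]
  have hz0 : z ≠ 0 := norm_pos_iff.1 (hr.trans hz)
  have hr' : r⁻¹ ≠ 0 := (inv_pos.2 hr).ne'
  have hreflect : ‖(reflect n p).eval z⁻¹‖ ≤ B / r ^ n := by
    refine Complex.norm_le_of_forall_mem_frontier_norm_le (isBounded_ball (x := (0 : ℂ)) (r := r⁻¹))
      (reflect n p).differentiable.diffContOnCl (fun w hw => ?_) ?_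
    · rw [frontier_ball _ hr', mem_sphere_zero_iff_norm] at hw
      have hw0 : w ≠ 0 := norm_ne_zero_iff.1 (hw ▸ hr')
      have hwr : ‖w⁻¹‖ = r := by rw [norm_inv, hw, inv_inv]
      have hkey := norm_eval_reflect_inv_mul_norm_pow hp (inv_ne_zero hw0)
      rw [inv_inv, hwr] at hkey
      rw [le_div_iff₀ (pow_pos hr n), hkey]
      exact hB _ (mem_closedBall_zero_iff.2 hwr.le)
    · rw [closure_ball _ hr', mem_closedBall_zero_iff, norm_inv]
      exact inv_anti₀ hr hz.le
  calc ‖p.eval z‖ = ‖(reflect n p).eval z⁻¹‖ * ‖z‖ ^ n :=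
        (norm_eval_reflect_inv_mul_norm_pow hp hz0).symm
    _ ≤ B / r ^ n * ‖z‖ ^ n := by gcongr
    _ = B * max 1 (‖z‖ / r) ^ n := by
        rw [max_eq_right ((one_le_div hr).2 hz.le), div_pow, div_mul_comm, mul_comm]

/-- `p` is one of the polynomials over which the supremum in `greenV E` is taken, with `m` as the
bound on its degree. -/
structure IsGreenCompetitor (E : Set ℂ) (m : ℕ) (p : ℂ[X]) : Prop where
  one_le : 1 ≤ m
  natDegree_le : p.natDegree ≤ m
  norm_eval_le_one : ∀ z ∈ E, ‖p.eval z‖ ≤ 1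

/-- `M` bounds the growth rate on the closed disk of radius `r` of all polynomials bounded by `1` on
`A`. This is the multiplicative form of `greenV A ≤ M`, in which zeros of the polynomials do not
meet the convention `log 0 = 0`. -/
def IsGrowthBound (A : Set ℂ) (r M : ℝ) : Prop :=
  ∀ ⦃m : ℕ⦄ ⦃p : ℂ[X]⦄, IsGreenCompetitor A m p →
    ∀ z ∈ closedBall (0 : ℂ) r, ‖p.eval z‖ ≤ Real.exp (m * M)

section Nonpolar

variable {A : Set ℂ}

theorem exists_small_on_of_not_isGrowthBound {M : ℝ} (hM : ¬ IsGrowthBound A 1 M) :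
    ∃ m : ℕ, ∃ q : ℂ[X], m ≠ 0 ∧ (∀ z : ℂ, ‖q.eval z‖ ≤ max 1 ‖z‖ ^ m) ∧
      (1 / 2) ^ m ≤ q.mahlerMeasure ∧ ∀ z ∈ A, ‖q.eval z‖ ≤ Real.exp (-(m * M)) := by
  simp only [IsGrowthBound, not_forall, not_le] at hM
  obtain ⟨m, p, ⟨hm, hp, hpA⟩, z, hz, hlarge⟩ := hM
  obtain ⟨w, hw, hmax⟩ := (isCompact_closedBall (0 : ℂ) 1).exists_isMaxOn ⟨z, hz⟩
    p.continuous.norm.continuousOn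
  have hlargew : Real.exp (m * M) < ‖p.eval w‖ := hlarge.trans_le (hmax hz)
  have hpos : 0 < ‖p.eval w‖ := (Real.exp_pos _).trans hlargew
  set q := C ((p.eval w)⁻¹) * p with hq
  have hqdeg : q.natDegree ≤ m := (natDegree_C_mul_le _ _).trans hp
  have hqeval : ∀ x, ‖q.eval x‖ = ‖p.eval w‖⁻¹ * ‖p.eval x‖ := fun x => by
    rw [hq, eval_C_mul, norm_mul, norm_inv]
  have hqball : ∀ x ∈ closedBall (0 : ℂ) 1, ‖q.eval x‖ ≤ 1 := fun x hx => by
    rw [hqeval, inv_mul_le_iff₀ hpos, mul_one]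
    exact hmax hx
  refine ⟨m, q, Nat.one_le_iff_ne_zero.1 hm, fun x => ?_, ?_, fun x hx => ?_⟩
  · simpa only [one_mul, div_one] using norm_eval_le_mul_max_pow one_pos hqdeg hqball x
  · have hMahler := norm_eval_le_two_pow_mul_mahlerMeasure hqdeg (mem_closedBall_zero_iff.1 hw)
    rw [hqeval, inv_mul_cancel₀ hpos.ne'] at hMahler
    rwa [one_div, inv_pow, inv_le_iff_one_le_mul₀' (by positivity)]
  · rw [hqeval, Real.exp_neg]
    exact (mul_le_of_le_one_right (inv_nonneg.2 hpos.le) (hpA x hx)).trans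
      (inv_anti₀ (Real.exp_pos _) hlargew.le)

theorem one_fourth_le_prod_one_half_rpow (N : ℕ) :
    (1 / 4 : ℝ) ≤ ∏ j ∈ Finset.range N, (1 / 2 : ℝ) ^ ((1 / 2 : ℝ) ^ j) := by
  rw [← Real.rpow_sum_of_pos (by norm_num)]
  calc (1 / 4 : ℝ) = (1 / 2 : ℝ) ^ (2 : ℝ) := by norm_num
    _ ≤ _ := Real.rpow_le_rpow_of_exponent_ge (by norm_num) (by norm_num) (sum_geometric_two_le N)

theorem pow_rpow_inv_mul_two_pow {m : ℕ} (hm : m ≠ 0) (j : ℕ) {x : ℝ} (hx : 0 ≤ x) :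
    (x ^ m) ^ (m * 2 ^ j : ℝ)⁻¹ = x ^ ((1 / 2 : ℝ) ^ j) := by
  rw [← Real.rpow_natCast_mul hx, mul_inv, mul_inv_cancel_left₀ (Nat.cast_ne_zero.2 hm), one_div,
    inv_pow]

theorem polarSet_of_forall_norm_eval_le {m : ℕ → ℕ} {q : ℕ → ℂ[X]} (hm : ∀ j, m j ≠ 0)
    (hgrowth : ∀ j z, ‖(q j).eval z‖ ≤ max 1 ‖z‖ ^ m j)
    (hMahler : ∀ j, (1 / 2) ^ m j ≤ (q j).mahlerMeasure)
    (hsmall : ∀ j, ∀ z ∈ A, ‖(q j).eval z‖ ≤ Real.exp (-(m j * 2 ^ j))) : PolarSet A := by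
  have ha : ∀ j, (0 : ℝ) < m j * 2 ^ j := fun j =>
    mul_pos (Nat.cast_pos.2 (Nat.pos_of_ne_zero (hm j))) (by positivity)
  have ha' : ∀ j, (0 : ℝ) < (m j * 2 ^ j : ℝ)⁻¹ := fun j => inv_pos.2 (ha j)
  refine polarSet_of_le_prod (f := fun j z => ‖(q j).eval z‖ ^ (m j * 2 ^ j : ℝ)⁻¹)
    (g := fun z => max 1 ‖z‖) (fun j => ?_) (fun j w => ?_) (by fun_prop) (fun w => ?_)
    (fun z => le_max_left _ _) (fun j z => ?_) (isCompact_sphere (0 : ℂ) 1)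
    (by norm_num : (0 : ℝ) < 1 / 4) (fun N => ?_) (Real.exp_lt_one_iff.2 neg_one_lt_zero)
    fun z hz j => ?_
  · exact (q j).continuous.norm.rpow_const fun _ => Or.inr (ha' j).le
  · exact (HasHolomorphicSupportAt.norm_of_analyticAt
      (AnalyticOnNhd.eval_polynomial (q j) w (Set.mem_univ w))).rpow (ha' j)
  · simpa only [norm_one, id_eq] using (HasHolomorphicSupportAt.norm_of_analyticAt
      (analyticAt_const (v := (1 : ℂ)))).sup (HasHolomorphicSupportAt.norm_of_analyticAt
        (analyticAt_id (z := w)))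
  · rw [← pow_rpow_inv_mul_two_pow (hm j) j (by positivity)]
    exact Real.rpow_le_rpow (norm_nonneg _) (hgrowth j z) (ha' j).le
  · obtain ⟨z, hz, hle⟩ := exists_prod_mahlerMeasure_rpow_le (Finset.range N) q
      (d := fun j => m j * 2 ^ j) fun j _ => mul_ne_zero (hm j) (pow_ne_zero j two_ne_zero)
    push_cast at hle
    refine ⟨z, mem_sphere_zero_iff_norm.2 hz, (one_fourth_le_prod_one_half_rpow N).trans ?_⟩
    refine (Finset.prod_le_prod (fun j _ => by positivity) fun j _ => ?_).trans hle
    rw [← pow_rpow_inv_mul_two_pow (hm j) j (by norm_num)]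
    exact Real.rpow_le_rpow (by positivity) (hMahler j) (ha' j).le
  · refine (Real.rpow_le_rpow (norm_nonneg _) (hsmall j z hz) (ha' j).le).trans_eq ?_
    rw [← Real.exp_mul, neg_mul, mul_inv_cancel₀ (ha j).ne']

theorem exists_isGrowthBound (hA : ¬ PolarSet A) {r : ℝ} : ∃ M, IsGrowthBound A r M := by
  obtain ⟨M, hM⟩ : ∃ M, IsGrowthBound A 1 M := by
    by_contra! hcon
    choose m q hm hgrowth hMahler hsmall using
      fun j : ℕ => exists_small_on_of_not_isGrowthBound (hcon (2 ^ j))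
    exact hA (polarSet_of_forall_norm_eval_le hm hgrowth hMahler hsmall)
  refine ⟨M + Real.log (max 1 r), fun m p hp z hz => ?_⟩
  have hr : (0 : ℝ) < max 1 r := zero_lt_one.trans_le (le_max_left _ _)
  calc ‖p.eval z‖ ≤ Real.exp (m * M) * max 1 (‖z‖ / 1) ^ m :=
        norm_eval_le_mul_max_pow one_pos hp.natDegree_le (hM hp) z
    _ ≤ Real.exp (m * M) * max 1 r ^ m := by
        rw [div_one]
        gcongr
        exact mem_closedBall_zero_iff.1 hz
    _ = Real.exp (m * (M + Real.log (max 1 r))) := by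
        rw [mul_add, Real.exp_add, Real.exp_nat_mul (Real.log _), Real.exp_log hr]

end Nonpolar

section GreenFunction

variable {A : Set ℂ} {r M : ℝ} {z : ℂ} {m : ℕ} {p : ℂ[X]}

theorem isGreenCompetitor_one (A : Set ℂ) : IsGreenCompetitor A 1 1 :=
  ⟨le_rfl, natDegree_one.trans_le zero_le_one, fun z _ => by rw [eval_one, norm_one]⟩

theorem IsGrowthBound.nonneg (hM : IsGrowthBound A r M) (hr : 0 ≤ r) : 0 ≤ M := by
  have h := hM (isGreenCompetitor_one A) 0 (mem_closedBall_self hr)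
  rwa [eval_one, norm_one, Nat.cast_one, one_mul, Real.one_le_exp_iff] at h

theorem IsGrowthBound.log_norm_eval_div_le (hM : IsGrowthBound A r M) (hr : 0 < r)
    (hp : IsGreenCompetitor A m p) (z : ℂ) :
    Real.log ‖p.eval z‖ / m ≤ M + Real.log (max 1 (‖z‖ / r)) := by
  have hm : (0 : ℝ) < m := Nat.cast_pos.2 hp.one_le
  have hmax : (1 : ℝ) ≤ max 1 (‖z‖ / r) := le_max_left _ _
  have hmax0 : (0 : ℝ) < max 1 (‖z‖ / r) := zero_lt_one.trans_le hmax
  rcases (norm_nonneg (p.eval z)).eq_or_lt' with hz | hz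
  · rw [hz, Real.log_zero, zero_div]
    exact add_nonneg (hM.nonneg hr.le) (Real.log_nonneg hmax)
  rw [div_le_iff₀ hm, Real.log_le_iff_le_exp hz]
  refine (norm_eval_le_mul_max_pow hr hp.natDegree_le (hM hp) z).trans_eq ?_
  rw [mul_comm _ (m : ℝ), mul_add, Real.exp_add, Real.exp_nat_mul (Real.log _), Real.exp_log hmax0]

theorem greenV_nonneg (A : Set ℂ) (z : ℂ) : 0 ≤ greenV A z := by
  obtain ⟨h1, h2, h3⟩ := isGreenCompetitor_one A
  have hlog : 0 = Real.log ‖(1 : ℂ[X]).eval z‖ / (1 : ℕ) := by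
    rw [eval_one, norm_one, Real.log_one, zero_div]
  exact Real.sSup_nonneg' ⟨0, ⟨1, h1, 1, h2, h3, hlog⟩, le_rfl⟩

theorem IsGrowthBound.greenV_le (hM : IsGrowthBound A r M) (hr : 0 < r) (z : ℂ) :
    greenV A z ≤ M + Real.log (max 1 (‖z‖ / r)) := by
  refine Real.sSup_le ?_ (add_nonneg (hM.nonneg hr.le) (Real.log_nonneg (le_max_left _ _)))
  rintro _ ⟨m, hm, p, hp, hpA, rfl⟩
  exact hM.log_norm_eval_div_le hr ⟨hm, hp, hpA⟩ z

theorem IsGrowthBound.log_norm_eval_div_le_greenV (hM : IsGrowthBound A r M) (hr : 0 < r)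
    (hp : IsGreenCompetitor A m p) (z : ℂ) : Real.log ‖p.eval z‖ / m ≤ greenV A z := by
  refine le_csSup ⟨M + Real.log (max 1 (‖z‖ / r)), ?_⟩
    ⟨m, hp.one_le, p, hp.natDegree_le, hp.norm_eval_le_one, rfl⟩
  rintro _ ⟨k, hk, q, hq, hqA, rfl⟩
  exact hM.log_norm_eval_div_le hr ⟨hk, hq, hqA⟩ z

theorem IsGrowthBound.eventually_greenV_le_add (hM : IsGrowthBound A r M) (hr : 0 < r)
    (hz : z ∈ closedBall 0 r) {ε : ℝ} (hε : 0 < ε) : ∀ᶠ w in 𝓝 z, greenV A w ≤ M + ε := by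
  have hcont : Continuous fun w : ℂ => Real.log (max 1 (‖w‖ / r)) :=
    Continuous.log (by fun_prop) fun w => (zero_lt_one.trans_le (le_max_left _ _)).ne'
  have hzε : Real.log (max 1 (‖z‖ / r)) < ε := by
    rwa [max_eq_left ((div_le_one hr).2 (mem_closedBall_zero_iff.1 hz)), Real.log_one]
  filter_upwards [hcont.continuousAt.eventually_lt continuousAt_const hzε] with w hw
  linarith [hM.greenV_le hr w]

theorem IsGrowthBound.greenVstar_le (hM : IsGrowthBound A r M) (hr : 0 < r)
    (hz : z ∈ closedBall 0 r) : greenVstar A z ≤ M := by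
  have hbdd : IsBoundedUnder (· ≥ ·) (𝓝 z) (greenV A) := isBoundedUnder_of ⟨0, greenV_nonneg A⟩
  exact le_of_forall_pos_le_add fun ε hε =>
    limsup_le_of_le hbdd.isCoboundedUnder_le (hM.eventually_greenV_le_add hr hz hε)

theorem IsGrowthBound.greenV_le_greenVstar (hM : IsGrowthBound A r M) (hr : 0 < r)
    (hz : z ∈ closedBall 0 r) : greenV A z ≤ greenVstar A z :=
  le_limsup_of_frequently_le (fun h => h.self_of_nhds le_rfl)
    ⟨M + 1, hM.eventually_greenV_le_add hr hz one_pos⟩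

theorem IsGrowthBound.isLeast_sSup_greenVstar (hM : IsGrowthBound A r M) (hr : 0 < r) :
    IsLeast {M | IsGrowthBound A r M} (sSup (greenVstar A '' closedBall 0 r)) := by
  refine ⟨fun m p hp z hz => ?_, fun M' hM' => ?_⟩
  · rcases (norm_nonneg (p.eval z)).eq_or_lt' with hpz | hpz
    · exact hpz ▸ (Real.exp_pos _).le
    have hbdd : BddAbove (greenVstar A '' closedBall 0 r) :=
      ⟨M, Set.forall_mem_image.2 fun w hw => hM.greenVstar_le hr hw⟩
    rw [← Real.log_le_iff_le_exp hpz, ← div_le_iff₀' (Nat.cast_pos.2 hp.one_le)]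
    calc Real.log ‖p.eval z‖ / m ≤ greenV A z := hM.log_norm_eval_div_le_greenV hr hp z
      _ ≤ greenVstar A z := hM.greenV_le_greenVstar hr hz
      _ ≤ sSup (greenVstar A '' closedBall 0 r) := le_csSup hbdd ⟨z, hz, rfl⟩
  · exact csSup_le ((nonempty_closedBall.2 hr.le).image _)
      (Set.forall_mem_image.2 fun w hw => IsGrowthBound.greenVstar_le hM' hr hw)

end GreenFunction

section PolySup

variable {p : ℂ[X]} {E : Set ℂ} {B : ℝ} {z : ℂ}

theorem polySup_nonneg (p : ℂ[X]) (E : Set ℂ) : 0 ≤ polySup p E :=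
  Real.sSup_nonneg (Set.forall_mem_image.2 fun _ _ => norm_nonneg _)

theorem polySup_le (hB : 0 ≤ B) (hp : ∀ z ∈ E, ‖p.eval z‖ ≤ B) : polySup p E ≤ B :=
  Real.sSup_le (Set.forall_mem_image.2 hp) hB

theorem norm_eval_le_polySup_of_mem_closure (hE : Bornology.IsBounded E) (hz : z ∈ closure E) :
    ‖p.eval z‖ ≤ polySup p E := by
  have hbdd : BddAbove ((fun w => ‖p.eval w‖) '' E) :=
    (hE.isCompact_closure.bddAbove_image p.continuous.norm.continuousOn).mono
      (Set.image_mono subset_closure)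
  exact closure_minimal (fun w hw => le_csSup hbdd ⟨w, hw, rfl⟩)
    (isClosed_le p.continuous.norm continuous_const) hz

theorem norm_eval_le_polySup_ball {r : ℝ} (hr : r ≠ 0) (hz : z ∈ closedBall 0 r) :
    ‖p.eval z‖ ≤ polySup p (ball 0 r) :=
  norm_eval_le_polySup_of_mem_closure isBounded_ball (closure_ball (0 : ℂ) hr ▸ hz)

theorem polySup_C_mul (c : ℂ) (p : ℂ[X]) (E : Set ℂ) :
    polySup (C c * p) E = ‖c‖ * polySup p E := by
  simp only [polySup, sSup_image', eval_C_mul, norm_mul, Real.mul_iSup_of_nonneg (norm_nonneg c)]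

theorem polySup_pow (p : ℂ[X]) (E : Set ℂ) {k : ℕ} (hk : k ≠ 0) :
    polySup (p ^ k) E = polySup p E ^ k := by
  simp only [polySup, sSup_image', eval_pow, ← coe_nnnorm, nnnorm_pow]
  exact_mod_cast (NNReal.iSup_pow_of_ne_zero hk fun z : E => ‖p.eval (z : ℂ)‖₊).symm

end PolySup

/-- `P` is a Chebyshev polynomial of degree at most `n` for `A`, normalised on the disk of radius
`r`. -/
structure IsTauChebyshev (A : Set ℂ) (r : ℝ) (n : ℕ) (P : ℂ[X]) : Prop where
  natDegree_le : P.natDegree ≤ n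
  polySup_ball_eq_one : polySup P (ball 0 r) = 1
  polySup_le_polySup : ∀ S : ℂ[X], S.natDegree ≤ n → polySup S (ball 0 r) = 1 →
    polySup P A ≤ polySup S A

section Chebyshev

variable {A : Set ℂ} {r M : ℝ} {n : ℕ} {p P : ℂ[X]}

theorem IsTauChebyshev.polySup_ball_mul_polySup_le (hP : IsTauChebyshev A r n P)
    (hp : p.natDegree ≤ n) : polySup p (ball 0 r) * polySup P A ≤ polySup p A := by
  rcases (polySup_nonneg p (ball 0 r)).eq_or_lt' with hp0 | hp0
  · rw [hp0, zero_mul]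
    exact polySup_nonneg p A
  have hnorm : ‖((polySup p (ball 0 r) : ℂ))⁻¹‖ = (polySup p (ball 0 r))⁻¹ := by
    rw [norm_inv, Complex.norm_real, Real.norm_of_nonneg hp0.le]
  have hmin := hP.polySup_le_polySup (C (polySup p (ball 0 r) : ℂ)⁻¹ * p)
    ((natDegree_C_mul_le _ _).trans hp) (by rw [polySup_C_mul, hnorm, inv_mul_cancel₀ hp0.ne'])
  rwa [polySup_C_mul, hnorm, le_inv_mul_iff₀ hp0] at hmin

theorem IsTauChebyshev.polySup_le_pow {k q : ℕ} {Q : ℂ[X]} (hP : IsTauChebyshev A r n P)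
    (hQ : IsTauChebyshev A r q Q) (hk : k ≠ 0) (hkq : q * k ≤ n) :
    polySup P A ≤ polySup Q A ^ k := by
  have hdeg : (Q ^ k).natDegree ≤ n :=
    (natDegree_pow_le_of_le k hQ.natDegree_le).trans (mul_comm k q ▸ hkq)
  have h := hP.polySup_ball_mul_polySup_le hdeg
  rwa [polySup_pow _ _ hk, polySup_pow _ _ hk, hQ.polySup_ball_eq_one, one_pow, one_mul] at h

theorem IsGrowthBound.polySup_ball_le (hM : IsGrowthBound A r M) (hA : Bornology.IsBounded A)
    (hn : 1 ≤ n) (hp : p.natDegree ≤ n) :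
    polySup p (ball 0 r) ≤ polySup p A * Real.exp (n * M) := by
  have hexp := Real.exp_pos (n * M)
  refine polySup_le (mul_nonneg (polySup_nonneg p A) hexp.le) fun z hz => ?_
  rw [← div_le_iff₀ hexp]
  refine le_of_forall_gt_imp_ge_of_dense fun δ hδ => ?_
  have hδ0 : 0 < δ := (polySup_nonneg p A).trans_lt hδ
  have hscaled : ∀ w, ‖(C (δ : ℂ)⁻¹ * p).eval w‖ = δ⁻¹ * ‖p.eval w‖ := fun w => by
    rw [eval_C_mul, norm_mul, norm_inv, Complex.norm_real, Real.norm_of_nonneg hδ0.le]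
  have hcomp : IsGreenCompetitor A n (C (δ : ℂ)⁻¹ * p) := by
    refine ⟨hn, (natDegree_C_mul_le _ _).trans hp, fun w hw => ?_⟩
    rw [hscaled, inv_mul_le_iff₀ hδ0, mul_one]
    exact (norm_eval_le_polySup_of_mem_closure hA (subset_closure hw)).trans hδ.le
  have hgrowth := hM hcomp z (ball_subset_closedBall hz)
  rwa [hscaled, inv_mul_le_iff₀ hδ0, ← div_le_iff₀ hexp] at hgrowth

theorem isGrowthBound_iff_forall_exp_le_polySup (hA : Bornology.IsBounded A) (hr : r ≠ 0)
    {T : ℕ → ℂ[X]} (hT : ∀ n, IsTauChebyshev A r n (T n)) :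
    IsGrowthBound A r M ↔ ∀ n : ℕ, 1 ≤ n → Real.exp (-(n * M)) ≤ polySup (T n) A := by
  simp only [Real.exp_neg, inv_le_iff_one_le_mul₀ (Real.exp_pos _)]
  refine ⟨fun hM n hn => ?_, fun h m p hp z hz => ?_⟩
  · exact (hT n).polySup_ball_eq_one ▸ hM.polySup_ball_le hA hn (hT n).natDegree_le
  · have hle : polySup p (ball 0 r) * polySup (T m) A ≤ 1 :=
      ((hT m).polySup_ball_mul_polySup_le hp.natDegree_le).trans
        (polySup_le zero_le_one hp.norm_eval_le_one)
    calc ‖p.eval z‖ ≤ polySup p (ball 0 r) := norm_eval_le_polySup_ball hr hz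
      _ ≤ polySup p (ball 0 r) * (polySup (T m) A * Real.exp (m * M)) :=
          le_mul_of_one_le_right (polySup_nonneg _ _) (h m hp.one_le)
      _ = polySup p (ball 0 r) * polySup (T m) A * Real.exp (m * M) := (mul_assoc _ _ _).symm
      _ ≤ Real.exp (m * M) := mul_le_of_le_one_left (Real.exp_pos _).le hle

end Chebyshev

theorem tendsto_div_of_isLUB_of_mul_le {u : ℕ → ℝ}
    (hu : ∀ ⦃q k n : ℕ⦄, 1 ≤ q → k ≠ 0 → q * k ≤ n → k * u q ≤ u n) {s : ℝ}
    (hs : IsLUB ((fun n : ℕ => u n / n) '' Set.Ici 1) s) :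
    Tendsto (fun n : ℕ => u n / n) atTop (𝓝 s) := by
  refine tendsto_order.2 ⟨fun a ha => ?_, fun a ha => ?_⟩
  · obtain ⟨_, ⟨q, hq, rfl⟩, haq⟩ := (lt_isLUB_iff hs).1 ha
    have hfloor : Tendsto (fun n : ℕ => ((n / q : ℕ) : ℝ) / n * u q) atTop (𝓝 (u q / q)) := by
      have h := ((tendsto_nat_floor_mul_div_atTop (inv_nonneg.2 (Nat.cast_nonneg' (α := ℝ) q))).comp
        tendsto_natCast_atTop_atTop).mul_const (u q)
      simpa only [Function.comp_def, inv_mul_eq_div, Nat.floor_div_eq_div] using h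
    filter_upwards [hfloor.eventually_const_lt haq, eventually_ge_atTop q] with n han hqn
    refine han.trans_le ?_
    rw [div_mul_eq_mul_div]
    gcongr
    exact hu hq (Nat.div_pos hqn hq).ne' (Nat.mul_div_le n q)
  · filter_upwards [eventually_ge_atTop 1] with n hn
    exact (hs.1 ⟨n, hn, rfl⟩).trans_lt ha

theorem tendsto_rpow_one_div_of_isLeast {t : ℕ → ℝ} {s : ℝ}
    (ht : ∀ ⦃q k n : ℕ⦄, 1 ≤ q → k ≠ 0 → q * k ≤ n → t n ≤ t q ^ k)
    (hs : IsLeast {M | ∀ n : ℕ, 1 ≤ n → Real.exp (-(n * M)) ≤ t n} s) :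
    Tendsto (fun n : ℕ => t n ^ (1 / (n : ℝ))) atTop (𝓝 (Real.exp (-s))) := by
  have hpos : ∀ n : ℕ, 1 ≤ n → 0 < t n := fun n hn => (Real.exp_pos _).trans_le (hs.1 n hn)
  have hiff : ∀ (M : ℝ) (n : ℕ), 1 ≤ n →
      (Real.exp (-(n * M)) ≤ t n ↔ -Real.log (t n) / n ≤ M) := by
    intro M n hn
    rw [← Real.le_log_iff_exp_le (hpos n hn), neg_le, div_le_iff₀' (Nat.cast_pos.2 hn)]
  have hlub : IsLUB ((fun n : ℕ => -Real.log (t n) / n) '' Set.Ici 1) s := by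
    refine ⟨Set.forall_mem_image.2 fun n hn => (hiff s n hn).1 (hs.1 n hn), fun M hM => ?_⟩
    exact hs.2 fun n hn => (hiff M n hn).2 (hM ⟨n, hn, rfl⟩)
  have hlim := tendsto_div_of_isLUB_of_mul_le (u := fun n => -Real.log (t n)) ?_ hlub
  · refine ((Real.continuous_exp.tendsto _).comp hlim.neg).congr' ?_
    filter_upwards [eventually_ge_atTop 1] with n hn
    rw [Function.comp_apply, Real.rpow_def_of_pos (hpos n hn)]
    congr 1
    ring
  · intro q k n hq hk hqk
    have hn : 1 ≤ n := (Nat.mul_pos hq (Nat.pos_of_ne_zero hk)).trans_le hqk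
    have hlog := Real.log_le_log (hpos n hn) (ht hq hk hqk)
    rw [Real.log_pow] at hlog
    simpa only [mul_neg] using neg_le_neg hlog

theorem exp_neg_le_rpow_one_div {n : ℕ} (hn : n ≠ 0) {s t : ℝ} (h : Real.exp (-(n * s)) ≤ t) :
    Real.exp (-s) ≤ t ^ (1 / (n : ℝ)) := by
  rw [one_div, Real.le_rpow_inv_iff_of_pos (Real.exp_pos _).le ((Real.exp_pos _).le.trans h)
    (Nat.cast_pos.2 (Nat.pos_of_ne_zero hn)), Real.rpow_natCast, ← Real.exp_nat_mul, mul_neg]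
  exact h

theorem chebyshev_tau_capacity_general {A : Set ℂ} (hA : Bornology.IsBounded A)
    (hApos : ¬ PolarSet A) {r : ℝ} (hr : 0 < r) {T : ℕ → ℂ[X]}
    (hT : ∀ n, IsTauChebyshev A r n (T n)) :
    Tendsto (fun n : ℕ => polySup (T n) A ^ (1 / (n : ℝ))) atTop (𝓝 (tauCap A r)) ∧
      ∀ n : ℕ, 1 ≤ n → tauCap A r ≤ polySup (T n) A ^ (1 / (n : ℝ)) := by
  obtain ⟨M, hM⟩ := exists_isGrowthBound hApos (r := r)
  have hleast := hM.isLeast_sSup_greenVstar hr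
  simp only [isGrowthBound_iff_forall_exp_le_polySup hA hr.ne' hT] at hleast
  exact ⟨tendsto_rpow_one_div_of_isLeast
      (fun _ _ _ _ hk hqk => (hT _).polySup_le_pow (hT _) hk hqk) hleast,
    fun n hn => exp_neg_le_rpow_one_div (Nat.one_le_iff_ne_zero.1 hn) (hleast.1 n hn)⟩

/-- For a compact set `A₀` of positive logarithmic capacity contained in the disk
`U(0,r)`, the Chebyshev-type polynomials `T_n` (of degree at most `n`, normalized by
`‖T_n‖_{U(0,r)} = 1`, minimizing `‖T_n‖_{A₀}`) satisfy
`lim_n ‖T_n‖_{A₀}^{1/n} = τ(A₀, U(0,r))` and `‖T_n‖_{A₀}^{1/n} ≥ τ(A₀, U(0,r))`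
for every `n ≥ 1`. -/
theorem chebyshev_tau_capacity (A₀ : Set ℂ) (hA₀c : IsCompact A₀)
    (hA₀pos : ¬ PolarSet A₀) (r : ℝ) (hr : 0 < r) (hsub : A₀ ⊆ ball (0 : ℂ) r)
    (T : ℕ → Polynomial ℂ) (hdeg : ∀ m, (T m).natDegree ≤ m)
    (hnorm : ∀ m, polySup (T m) (ball (0 : ℂ) r) = 1)
    (hmin : ∀ m, ∀ S : Polynomial ℂ, S.natDegree ≤ m →
      polySup S (ball (0 : ℂ) r) = 1 → polySup (T m) A₀ ≤ polySup S A₀) :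
    Filter.Tendsto (fun m : ℕ => polySup (T m) A₀ ^ (1 / (m : ℝ))) Filter.atTop
      (nhds (tauCap A₀ r)) ∧
    ∀ m : ℕ, 1 ≤ m → tauCap A₀ r ≤ polySup (T m) A₀ ^ (1 / (m : ℝ)) :=
  chebyshev_tau_capacity_general hA₀c.isBounded hA₀pos hr fun m => ⟨hdeg m, hnorm m, hmin m⟩
end
end
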